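/- arXiv:1705.03434 — 4 statements merged into one kernel-verified Lean document; each statement's English description precedes it below -/
import Mathlib

section
/- Let H be a finite-dimensional real inner product space, let A : H → H be a self-adjoint linear operator with ⟨Au,u⟩ ≥ δ‖u‖² for all u ∈ H for some δ > 0, let τ > 0 be a time step and σ ≥ 1/2 a weight. Suppose the sequence (yⁿ)₀≤n≤N in H satisfies the two-level weighted scheme (yⁿ⁺¹ − yⁿ)/τ + A(σ yⁿ⁺¹ + (1−σ) yⁿ) = φⁿ for n = 0,1,…,N−1, with y⁰ = w⁰ (note that for σ > 0 the operator I + στA is invertible, so yⁿ⁺¹ is well defined). Then the scheme is unconditionally stable: for every n = 0,1,…,N−1 one has ‖yⁿ⁺¹‖ ≤ ‖w⁰‖ + τ · Σ_{j=0}^{n} ‖φʲ‖. -/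
open scoped RealInnerProductSpace

/-!
The scheme determines the intermediate value `v = σ x + (1 - σ) y` of a step from `y` to `x` through
`v + σ τ A v = y + σ τ f`. As `⟪A v, v⟫ ≥ 0`, the Cayley-type vector `v - σ τ A v` is no longer than
`v + σ τ A v`. The new value is the combination `2 σ x = (2 σ - 1) y + σ τ f + (v - σ τ A v)`,
whose coefficients are nonnegative exactly when `σ ≥ 1 / 2`, and the triangle inequality gives
`‖x‖ ≤ ‖y‖ + τ ‖f‖`.
-/

section

variable {H : Type*} [SeminormedAddCommGroup H] [InnerProductSpace ℝ H]

lemma norm_sub_le_norm_add_of_inner_nonneg {u v : H} (h : 0 ≤ ⟪u, v⟫) : ‖u - v‖ ≤ ‖u + v‖ := by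
  refine le_of_sq_le_sq ?_ (norm_nonneg _)
  rw [norm_sub_sq_real, norm_add_sq_real]
  linarith

lemma norm_le_norm_add_norm_of_inner_weighted_nonneg {σ : ℝ} (hσ : 1 / 2 ≤ σ) {x y w : H}
    (hw : 0 ≤ ⟪σ • x + (1 - σ) • y, w⟫) : ‖x‖ ≤ ‖y‖ + ‖x - y + w‖ := by
  set v := σ • x + (1 - σ) • y with hv
  set f := x - y + w with hf
  have hσ_pos : 0 < σ := by linarith
  have hcontract : ‖v - σ • w‖ ≤ ‖v + σ • w‖ :=
    norm_sub_le_norm_add_of_inner_nonneg <| by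
      rw [real_inner_smul_right]
      exact mul_nonneg hσ_pos.le hw
  have hsum : v + σ • w = y + σ • f := by rw [hv, hf]; module
  have hx : (2 * σ) • x = (2 * σ - 1) • y + σ • f + (v - σ • w) := by rw [hv, hf]; module
  have hscaled : 2 * σ * ‖x‖ ≤ 2 * σ * (‖y‖ + ‖f‖) :=
    calc 2 * σ * ‖x‖
        = ‖(2 * σ - 1) • y + σ • f + (v - σ • w)‖ := by
          rw [← hx, norm_smul_of_nonneg (by positivity)]
      _ ≤ ‖(2 * σ - 1) • y‖ + ‖σ • f‖ + ‖v - σ • w‖ := norm_add₃_le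
      _ ≤ ‖(2 * σ - 1) • y‖ + ‖σ • f‖ + (‖y‖ + ‖σ • f‖) := by
          gcongr
          exact hcontract.trans (hsum ▸ norm_add_le _ _)
      _ = 2 * σ * (‖y‖ + ‖f‖) := by
          rw [norm_smul_of_nonneg (by linarith), norm_smul_of_nonneg hσ_pos.le]
          ring
  exact le_of_mul_le_mul_left hscaled (by positivity)

lemma norm_le_norm_add_mul_norm_of_twoLevel_step {A : H → H} (hA : ∀ u, 0 ≤ ⟪A u, u⟫)
    {τ : ℝ} (hτ : 0 < τ) {σ : ℝ} (hσ : 1 / 2 ≤ σ) {x y f : H}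
    (hstep : τ⁻¹ • (x - y) + A (σ • x + (1 - σ) • y) = f) : ‖x‖ ≤ ‖y‖ + τ * ‖f‖ := by
  have hinner : 0 ≤ ⟪σ • x + (1 - σ) • y, τ • A (σ • x + (1 - σ) • y)⟫ := by
    rw [real_inner_smul_right, real_inner_comm]
    exact mul_nonneg hτ.le (hA _)
  have hscaled : x - y + τ • A (σ • x + (1 - σ) • y) = τ • f := by
    rw [← hstep, smul_add, smul_inv_smul₀ hτ.ne']
  rw [← norm_smul_of_nonneg hτ.le, ← hscaled]
  exact norm_le_norm_add_norm_of_inner_weighted_nonneg hσ hinner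

theorem twoLevelScheme_stability_general {A : ℕ → H → H} {τ σ : ℕ → ℝ} {N : ℕ} {y φ : ℕ → H}
    (hA : ∀ n < N, ∀ u, 0 ≤ ⟪A n u, u⟫) (hτ : ∀ n < N, 0 < τ n) (hσ : ∀ n < N, 1 / 2 ≤ σ n)
    (hscheme : ∀ n < N,
      (τ n)⁻¹ • (y (n + 1) - y n) + A n (σ n • y (n + 1) + (1 - σ n) • y n) = φ n)
    {n : ℕ} (hn : n ≤ N) :
    ‖y n‖ ≤ ‖y 0‖ + ∑ j ∈ Finset.range n, τ j * ‖φ j‖ := by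
  rw [← sub_le_iff_le_add', ← Finset.sum_range_sub (‖y ·‖)]
  refine Finset.sum_le_sum fun j hj ↦ sub_le_iff_le_add'.mpr ?_
  have hjN : j < N := (Finset.mem_range.mp hj).trans_le hn
  exact norm_le_norm_add_mul_norm_of_twoLevel_step (hA j hjN) (hτ j hjN) (hσ j hjN) (hscheme j hjN)

end

/-- Theorem 1 of the paper: unconditional stability of the two-level weighted
scheme `(yⁿ⁺¹ − yⁿ)/τ + A(σ yⁿ⁺¹ + (1−σ) yⁿ) = φⁿ` for a self-adjoint
positive definite operator `A` and weight `σ ≥ 1/2`. -/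
theorem twoLevelScheme_stability
    {H : Type*} [NormedAddCommGroup H] [InnerProductSpace ℝ H]
    [FiniteDimensional ℝ H]
    (A : H →L[ℝ] H)
    (hAsa : ∀ u v : H, ⟪A u, v⟫ = ⟪u, A v⟫)
    (δ : ℝ) (hδ : 0 < δ)
    (hApos : ∀ u : H, δ * ‖u‖ ^ 2 ≤ ⟪A u, u⟫)
    (τ : ℝ) (hτ : 0 < τ)
    (σ : ℝ) (hσ : 1 / 2 ≤ σ)
    (N : ℕ) (y φ : ℕ → H) (w0 : H)
    (hscheme : ∀ n, n < N →
      τ⁻¹ • (y (n + 1) - y n) + A (σ • y (n + 1) + (1 - σ) • y n) = φ n)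
    (hinit : y 0 = w0) :
    ∀ n, n < N →
      ‖y (n + 1)‖ ≤ ‖w0‖ + τ * ∑ j ∈ Finset.range (n + 1), ‖φ j‖ := by
  intro n hn
  have hA (u : H) : 0 ≤ ⟪A u, u⟫ := (by positivity : 0 ≤ δ * ‖u‖ ^ 2).trans (hApos u)
  rw [← hinit, Finset.mul_sum]
  exact twoLevelScheme_stability_general (fun _ _ ↦ hA) (fun _ _ ↦ hτ) (fun _ _ ↦ hσ) hscheme hn
end

section
/- Kellogg's lemma: Let H be a finite-dimensional real inner product space, let A : H → H be self-adjoint with ⟨Au,u⟩ ≥ 0 for all u, and let γ ≥ 0. Then I + γA is invertible and the operator T = (I + γA)⁻¹(I − γA) satisfies ‖T‖ ≤ 1 in the operator norm. -/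
open scoped RealInnerProductSpace

/-!
Write `D = γA`. Since `Re ⟪Du, u⟫ ≥ 0`, the operator `I + D` is coercive, hence invertible. It
commutes with `I - D`, so `T = (I - D)(I + D)⁻¹`. Thus `T` maps `y + Dy` to `y - Dy`, and the latter
is not longer, because the squares of the two norms differ by `4 Re ⟪Dy, y⟫ ≥ 0`.
-/

section NormedSpace

variable {𝕜 E F : Type*} [NontriviallyNormedField 𝕜]
  [SeminormedAddCommGroup E] [NormedSpace 𝕜 E] [SeminormedAddCommGroup F] [NormedSpace 𝕜 F]

theorem opNorm_comp_ringInverse_le {B : E →L[𝕜] E} (hB : IsUnit B) {C : E →L[𝕜] F} {c : ℝ}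
    (hc : 0 ≤ c) (h : ∀ y, ‖C y‖ ≤ c * ‖B y‖) : ‖C ∘L Ring.inverse B‖ ≤ c := by
  refine ContinuousLinearMap.opNorm_le_bound _ hc fun x => ?_
  have hx : B (Ring.inverse B x) = x := DFunLike.congr_fun (Ring.mul_inverse_cancel B hB) x
  calc ‖C (Ring.inverse B x)‖ ≤ c * ‖B (Ring.inverse B x)‖ := h _
    _ = c * ‖x‖ := by rw [hx]

end NormedSpace

section MonoidWithZero

variable {M : Type*} [MonoidWithZero M]

theorem commute_ringInverse_left {a b : M} (h : Commute a b) : Commute (Ring.inverse a) b := by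
  by_cases ha : IsUnit a
  · obtain ⟨u, rfl⟩ := ha
    rw [Ring.inverse_unit]
    exact h.units_inv_left
  · rw [Ring.inverse_non_unit a ha]
    exact Commute.zero_left b

end MonoidWithZero

section InnerProductSpace

open scoped InnerProductSpace

variable {𝕜 E : Type*} [RCLike 𝕜]

theorem norm_sub_le_norm_add_iff_re_inner_nonneg [SeminormedAddCommGroup E] [InnerProductSpace 𝕜 E]
    {x y : E} : ‖x - y‖ ≤ ‖x + y‖ ↔ 0 ≤ RCLike.re ⟪x, y⟫_𝕜 := by
  rw [← sq_le_sq₀ (norm_nonneg _) (norm_nonneg _), norm_sub_sq (𝕜 := 𝕜), norm_add_sq (𝕜 := 𝕜)]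
  constructor <;> intro h <;> linarith

variable [NormedAddCommGroup E] [InnerProductSpace 𝕜 E] [CompleteSpace E]

theorem isUnit_one_add_of_re_inner_nonneg {D : E →L[𝕜] E}
    (hD : ∀ u, 0 ≤ RCLike.re ⟪D u, u⟫_𝕜) : IsUnit (1 + D) := by
  refine ContinuousLinearMap.isUnit_of_forall_le_norm_inner_map _ one_pos fun u => ?_
  calc ‖u‖ ^ 2 * ((1 : NNReal) : ℝ) = ‖u‖ ^ 2 := by rw [NNReal.coe_one, mul_one]
    _ ≤ ‖u‖ ^ 2 + RCLike.re ⟪D u, u⟫_𝕜 := le_add_of_nonneg_right (hD u)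
    _ = RCLike.re ⟪(1 + D) u, u⟫_𝕜 := by
        rw [add_apply, one_apply_eq_self, inner_add_left, map_add, ← norm_sq_eq_re_inner]
    _ ≤ ‖⟪(1 + D) u, u⟫_𝕜‖ := RCLike.re_le_norm _

theorem opNorm_ringInverse_one_add_mul_one_sub_le_one {D : E →L[𝕜] E}
    (hD : ∀ u, 0 ≤ RCLike.re ⟪D u, u⟫_𝕜) : ‖Ring.inverse (1 + D) * (1 - D)‖ ≤ 1 := by
  have hcomm : Commute (1 + D) (1 - D) :=
    (Commute.one_left _).add_left ((Commute.one_right D).sub_right (Commute.refl D))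
  have hle (y : E) : ‖(1 - D) y‖ ≤ 1 * ‖(1 + D) y‖ := by
    have hy : 0 ≤ RCLike.re ⟪y, D y⟫_𝕜 := by
      rw [inner_re_symm]
      exact hD y
    rw [one_mul]
    exact norm_sub_le_norm_add_iff_re_inner_nonneg.2 hy
  rw [(commute_ringInverse_left hcomm).eq]
  exact opNorm_comp_ringInverse_le (isUnit_one_add_of_re_inner_nonneg hD) zero_le_one hle

theorem kellogg_lemma_general (A : E →L[𝕜] E) (hA : ∀ u, 0 ≤ RCLike.re ⟪A u, u⟫_𝕜)
    (γ : ℝ) (hγ : 0 ≤ γ) :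
    IsUnit (1 + (γ : 𝕜) • A) ∧
      ‖Ring.inverse (1 + (γ : 𝕜) • A) * (1 - (γ : 𝕜) • A)‖ ≤ 1 := by
  have hγA (u : E) : 0 ≤ RCLike.re ⟪((γ : 𝕜) • A) u, u⟫_𝕜 := by
    rw [smul_apply, inner_smul_left, RCLike.conj_ofReal, RCLike.re_ofReal_mul]
    exact mul_nonneg hγ (hA u)
  exact ⟨isUnit_one_add_of_re_inner_nonneg hγA, opNorm_ringInverse_one_add_mul_one_sub_le_one hγA⟩

end InnerProductSpace

/-- Kellogg's lemma: for a self-adjoint nonnegative operator `A` on a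
finite-dimensional real inner product space and `γ ≥ 0`, the operator
`I + γA` is invertible and `T = (I + γA)⁻¹(I − γA)` satisfies `‖T‖ ≤ 1`. -/
theorem kellogg_lemma
    {H : Type*} [NormedAddCommGroup H] [InnerProductSpace ℝ H]
    [FiniteDimensional ℝ H]
    (A : H →L[ℝ] H)
    (hAsa : ∀ u v : H, ⟪A u, v⟫ = ⟪u, A v⟫)
    (hApos : ∀ u : H, 0 ≤ ⟪A u, u⟫)
    (γ : ℝ) (hγ : 0 ≤ γ) :
    IsUnit ((1 : H →L[ℝ] H) + γ • A) ∧
    ‖Ring.inverse ((1 : H →L[ℝ] H) + γ • A) * ((1 : H →L[ℝ] H) - γ • A)‖ ≤ 1 := by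
  have : CompleteSpace H := FiniteDimensional.complete ℝ H
  exact kellogg_lemma_general A hApos γ hγ
end

section
/- Let H be a finite-dimensional real inner product space and let A₁, A₂ : H → H be self-adjoint operators with ⟨A_α u,u⟩ ≥ 0 for all u (α = 1,2). Let τ > 0 and σ ≥ 1/2, and set B_α = I + στA_α (α = 1,2), which are invertible. Suppose the sequence (yⁿ)₀≤n≤N in H satisfies the factorized scheme B₁B₂ (yⁿ⁺¹ − yⁿ)/τ + (A₁ + A₂) yⁿ = φⁿ for n = 0,1,…,N−1, with y⁰ = w⁰. Then the scheme is unconditionally stable and for every n = 0,1,…,N−1 one has ‖B₂ yⁿ⁺¹‖ ≤ ‖B₂ w⁰‖ + τ · Σ_{j=0}^{n} ‖φʲ‖. -/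
open scoped RealInnerProductSpace

/-!
Put `c = στ`, `r = 1 / (2σ) ≤ 1`, `Bᵢ = 1 + c Aᵢ` and `Cᵢ = 1 - c Aᵢ`. Since
`C₁ C₂ = B₁ B₂ - 2c (A₁ + A₂)` and `2rc = τ`, one time step reads
`B₁ (B₂ yⁿ⁺¹ - (1 - r) B₂ yⁿ) = r C₁ C₂ yⁿ + τ φⁿ`. Nonnegativity of `Aᵢ` gives Kellogg's
inequality `‖Cᵢ u‖ ≤ ‖Bᵢ u‖`. If `B₁ z = C₁ v + g`, then `B₁ (z + v) = 2v + g` and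
`C₁ (z + v) = 2z - g`, so Kellogg's inequality at `z + v` yields `‖z‖ ≤ ‖v‖ + ‖g‖` without
inverting `B₁`. Hence `‖B₂ yⁿ⁺¹ - (1 - r) B₂ yⁿ‖ ≤ r ‖C₂ yⁿ‖ + τ ‖φⁿ‖ ≤ r ‖B₂ yⁿ‖ + τ ‖φⁿ‖`.
-/

section Accretive

variable {H : Type*} [SeminormedAddCommGroup H] [InnerProductSpace ℝ H]

theorem norm_sub_le_norm_add_iff_real_inner_nonneg {u v : H} :
    ‖u - v‖ ≤ ‖u + v‖ ↔ 0 ≤ ⟪u, v⟫ := by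
  rw [← sq_le_sq₀ (norm_nonneg _) (norm_nonneg _), norm_sub_sq_real, norm_add_sq_real]
  constructor <;> intro h <;> linarith

theorem norm_one_sub_smul_apply_le_norm_one_add_smul_apply {A : H →ₗ[ℝ] H}
    (hA : ∀ u, 0 ≤ ⟪A u, u⟫) {c : ℝ} (hc : 0 ≤ c) (u : H) :
    ‖(1 - c • A) u‖ ≤ ‖(1 + c • A) u‖ := by
  refine norm_sub_le_norm_add_iff_real_inner_nonneg.2 ?_
  rw [LinearMap.smul_apply, real_inner_smul_right, real_inner_comm]
  exact mul_nonneg hc (hA u)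

theorem norm_le_of_one_add_smul_apply_eq {A : H →ₗ[ℝ] H} (hA : ∀ u, 0 ≤ ⟪A u, u⟫)
    {c : ℝ} (hc : 0 ≤ c) {z v g : H} (h : (1 + c • A) z = (1 - c • A) v + g) :
    ‖z‖ ≤ ‖v‖ + ‖g‖ := by
  have hadd : (1 + c • A) (z + v) = (2 : ℝ) • v + g := by
    rw [map_add, h]
    simp only [LinearMap.add_apply, LinearMap.sub_apply, Module.End.one_apply]
    module
  have hsub : (1 - c • A) (z + v) = (2 : ℝ) • z - g := by
    rw [eq_sub_of_add_eq' h.symm, map_add]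
    simp only [LinearMap.add_apply, LinearMap.sub_apply, Module.End.one_apply]
    module
  have hcontract : ‖(2 : ℝ) • z - g‖ ≤ ‖(2 : ℝ) • v + g‖ := by
    rw [← hadd, ← hsub]
    exact norm_one_sub_smul_apply_le_norm_one_add_smul_apply hA hc (z + v)
  have hdouble : 2 * ‖z‖ ≤ 2 * (‖v‖ + ‖g‖) :=
    calc
      2 * ‖z‖ = ‖(2 : ℝ) • z‖ := by rw [norm_smul, Real.norm_two]
      _ ≤ ‖(2 : ℝ) • z - g‖ + ‖g‖ := norm_le_norm_sub_add _ _
      _ ≤ ‖(2 : ℝ) • v + g‖ + ‖g‖ := by gcongr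
      _ ≤ ‖(2 : ℝ) • v‖ + ‖g‖ + ‖g‖ := by gcongr; exact norm_add_le _ _
      _ = 2 * (‖v‖ + ‖g‖) := by rw [norm_smul, Real.norm_two]; ring
  linarith

end Accretive

theorem one_sub_smul_mul_one_sub_smul {R A : Type*} [CommRing R] [Ring A] [Algebra R A]
    (c : R) (a b : A) :
    (1 - c • a) * (1 - c • b) = (1 + c • a) * (1 + c • b) - (2 * c) • (a + b) := by
  simp only [sub_mul, mul_sub, add_mul, mul_add, one_mul, mul_one]
  module

section FactorizedScheme

theorem one_add_smul_apply_sub_of_factorized_step {R E : Type*} [CommRing R] [AddCommGroup E]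
    [Module R E] {A₁ A₂ : E →ₗ[R] E} {c r τ : R} (hr : r * (2 * c) = τ) {x x' f : E}
    (hstep : ((1 + c • A₁) * (1 + c • A₂)) (x' - x) + τ • (A₁ + A₂) x = τ • f) :
    (1 + c • A₁) ((1 + c • A₂) x' - (1 - r) • (1 + c • A₂) x) =
      (1 - c • A₁) (r • (1 - c • A₂) x) + τ • f := by
  have hproduct : r • ((1 - c • A₁) * (1 - c • A₂)) x =
      r • ((1 + c • A₁) * (1 + c • A₂)) x - τ • (A₁ + A₂) x := by
    rw [one_sub_smul_mul_one_sub_smul, LinearMap.sub_apply, LinearMap.smul_apply, smul_sub,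
      smul_smul, hr]
  rw [map_sub, map_smul, map_smul, ← Module.End.mul_apply, ← Module.End.mul_apply,
    ← Module.End.mul_apply, hproduct, ← hstep, map_sub]
  module

variable {H : Type*} [SeminormedAddCommGroup H] [InnerProductSpace ℝ H] {A₁ A₂ : H →ₗ[ℝ] H}
  {τ σ : ℝ}

theorem norm_factorized_step_le (hA₁ : ∀ u, 0 ≤ ⟪A₁ u, u⟫) (hA₂ : ∀ u, 0 ≤ ⟪A₂ u, u⟫)
    (hτ : 0 < τ) (hσ : 1 / 2 ≤ σ) {x x' f : H}
    (hstep : ((1 + (σ * τ) • A₁) * (1 + (σ * τ) • A₂)) (τ⁻¹ • (x' - x)) + (A₁ + A₂) x = f) :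
    ‖(1 + (σ * τ) • A₂) x'‖ ≤ ‖(1 + (σ * τ) • A₂) x‖ + τ * ‖f‖ := by
  have hσ_pos : 0 < σ := one_half_pos.trans_le hσ
  have hc : 0 ≤ σ * τ := (mul_pos hσ_pos hτ).le
  set r := (2 * σ)⁻¹
  have hr_nonneg : 0 ≤ r := by positivity
  have hr_le_one : r ≤ 1 := inv_le_one_of_one_le₀ (by linarith)
  have hr : r * (2 * (σ * τ)) = τ := by
    rw [← mul_assoc 2 σ τ, inv_mul_cancel_left₀ (by positivity)]
  have hscaled : ((1 + (σ * τ) • A₁) * (1 + (σ * τ) • A₂)) (x' - x) + τ • (A₁ + A₂) x =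
      τ • f := by
    rw [← hstep, map_smul, smul_add, smul_inv_smul₀ hτ.ne']
  set b := (1 + (σ * τ) • A₂) x
  set b' := (1 + (σ * τ) • A₂) x'
  have hinner : ‖(1 - (σ * τ) • A₂) x‖ ≤ ‖b‖ :=
    norm_one_sub_smul_apply_le_norm_one_add_smul_apply hA₂ hc x
  have houter : ‖b' - (1 - r) • b‖ ≤ ‖r • (1 - (σ * τ) • A₂) x‖ + ‖τ • f‖ :=
    norm_le_of_one_add_smul_apply_eq hA₁ hc (one_add_smul_apply_sub_of_factorized_step hr hscaled)
  calc
    ‖b'‖ ≤ ‖b' - (1 - r) • b‖ + ‖(1 - r) • b‖ := norm_le_norm_sub_add _ _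
    _ ≤ ‖r • (1 - (σ * τ) • A₂) x‖ + ‖τ • f‖ + ‖(1 - r) • b‖ := by gcongr
    _ = r * ‖(1 - (σ * τ) • A₂) x‖ + τ * ‖f‖ + (1 - r) * ‖b‖ := by
      rw [norm_smul_of_nonneg hr_nonneg, norm_smul_of_nonneg hτ.le,
        norm_smul_of_nonneg (sub_nonneg.2 hr_le_one)]
    _ ≤ r * ‖b‖ + τ * ‖f‖ + (1 - r) * ‖b‖ := by gcongr
    _ = ‖b‖ + τ * ‖f‖ := by ring

theorem factorized_scheme_stability_general
    (hA₁ : ∀ u, 0 ≤ ⟪A₁ u, u⟫) (hA₂ : ∀ u, 0 ≤ ⟪A₂ u, u⟫) (hτ : 0 < τ) (hσ : 1 / 2 ≤ σ)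
    {N : ℕ} {y φ : ℕ → H}
    (hscheme : ∀ n < N,
      ((1 + (σ * τ) • A₁) * (1 + (σ * τ) • A₂)) (τ⁻¹ • (y (n + 1) - y n)) + (A₁ + A₂) (y n) =
        φ n)
    {n : ℕ} (hn : n < N) :
    ‖(1 + (σ * τ) • A₂) (y (n + 1))‖ ≤
      ‖(1 + (σ * τ) • A₂) (y 0)‖ + τ * ∑ j ∈ Finset.range (n + 1), ‖φ j‖ := by
  rw [← sub_le_iff_le_add', Finset.mul_sum,
    ← Finset.sum_range_sub fun k ↦ ‖(1 + (σ * τ) • A₂) (y k)‖]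
  refine Finset.sum_le_sum fun j hj ↦ sub_le_iff_le_add'.2 ?_
  have hjN : j < N := (Finset.mem_range_succ_iff.1 hj).trans_lt hn
  exact norm_factorized_step_le hA₁ hA₂ hτ hσ (hscheme j hjN)

end FactorizedScheme

/-- Theorem 2 of the paper: unconditional stability of the factorized
two-component splitting scheme `B₁B₂(yⁿ⁺¹ − yⁿ)/τ + (A₁ + A₂)yⁿ = φⁿ`,
where `B_α = I + στA_α`, for self-adjoint nonnegative `A₁, A₂` and `σ ≥ 1/2`. -/
theorem factorized_scheme_stability
    {H : Type*} [NormedAddCommGroup H] [InnerProductSpace ℝ H]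
    [FiniteDimensional ℝ H]
    (A₁ A₂ : H →L[ℝ] H)
    (hA₁sa : ∀ u v : H, ⟪A₁ u, v⟫ = ⟪u, A₁ v⟫)
    (hA₂sa : ∀ u v : H, ⟪A₂ u, v⟫ = ⟪u, A₂ v⟫)
    (hA₁pos : ∀ u : H, 0 ≤ ⟪A₁ u, u⟫)
    (hA₂pos : ∀ u : H, 0 ≤ ⟪A₂ u, u⟫)
    (τ : ℝ) (hτ : 0 < τ)
    (σ : ℝ) (hσ : 1 / 2 ≤ σ)
    (N : ℕ) (y φ : ℕ → H) (w0 : H)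
    (hscheme : ∀ n, n < N →
      (((1 : H →L[ℝ] H) + (σ * τ) • A₁) * ((1 : H →L[ℝ] H) + (σ * τ) • A₂))
          (τ⁻¹ • (y (n + 1) - y n)) + (A₁ + A₂) (y n) = φ n)
    (hinit : y 0 = w0) :
    ∀ n, n < N →
      ‖((1 : H →L[ℝ] H) + (σ * τ) • A₂) (y (n + 1))‖ ≤
        ‖((1 : H →L[ℝ] H) + (σ * τ) • A₂) w0‖ +
          τ * ∑ j ∈ Finset.range (n + 1), ‖φ j‖ := by
  subst hinit
  intro n hn
  exact factorized_scheme_stability_general (A₁ := A₁.toLinearMap) (A₂ := A₂.toLinearMap)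
    hA₁pos hA₂pos hτ hσ hscheme hn
end

section
/- Let H be a finite-dimensional real inner product space and let A₁, A₂ : H → H be self-adjoint operators with ⟨A_α u,u⟩ ≥ 0 for all u (α = 1,2). Let τ > 0 and σ > 0, and set B_α = I + στA_α and S_α = B_α⁻¹(I − στA_α) for α = 1,2. Suppose y, y' ∈ H and φ ∈ H satisfy the factorized scheme B₁B₂ (y' − y)/τ + (A₁ + A₂) y = φ. Then B₂ y' = S B₂ y + τ B₁⁻¹ φ, where S = ((2σ−1)/(2σ)) I + (1/(2σ)) S₁ S₂. Equivalently, one has the operator identity B₁B₂ − 2στ(A₁+A₂) = (I − στA₁)(I − στA₂). -/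
open scoped RealInnerProductSpace

/-!
Since `B₂` commutes with `I - στA₂`, one has `S₂B₂ = I - στA₂`, so that
`S₁S₂B₂ = B₁⁻¹(I - στA₁)(I - στA₂) = B₂ - 2στB₁⁻¹(A₁ + A₂)`. The two weights of `S` sum to `1` and
the second one turns `2στ` into `τ`, which gives `SB₂ = B₂ - τB₁⁻¹(A₁ + A₂)`. This is the operator
acting on `y` when the scheme is solved for `B₂y'`.
-/

/-- The Cayley transform `(1 + a)⁻¹ (1 - a)` of a ring element; the inverse is `Ring.inverse`,
which is `0` when `1 + a` is not a unit. For `a = στA_α` this is the operator `S_α`. -/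
noncomputable def cayleyTransform {R : Type*} [Ring R] (a : R) : R :=
  Ring.inverse (1 + a) * (1 - a)

/-- The transition operator `S = ((2σ - 1)/(2σ)) I + (1/(2σ)) S₁ S₂` of the factorized scheme, in
an arbitrary algebra; `a₁` and `a₂` stand for the unscaled operators `A₁` and `A₂`. -/
noncomputable def factorizedTransition {𝕜 R : Type*} [Field 𝕜] [Ring R] [Algebra 𝕜 R]
    (σ τ : 𝕜) (a₁ a₂ : R) : R :=
  ((2 * σ - 1) / (2 * σ)) • (1 : R) +
    (1 / (2 * σ)) • (cayleyTransform ((σ * τ) • a₁) * cayleyTransform ((σ * τ) • a₂))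

section Ring

variable {R : Type*} [Ring R] {a b : R}

lemma one_add_mul_one_add_sub_two_nsmul (a b : R) :
    (1 + a) * (1 + b) - 2 • (a + b) = (1 - a) * (1 - b) := by
  noncomm_ring

lemma cayleyTransform_mul_one_add (ha : IsUnit (1 + a)) :
    cayleyTransform a * (1 + a) = 1 - a := by
  have hcomm : (1 - a) * (1 + a) = (1 + a) * (1 - a) := by noncomm_ring
  rw [cayleyTransform, mul_assoc, hcomm, Ring.inverse_mul_cancel_left _ _ ha]

lemma cayleyTransform_mul_cayleyTransform_mul_one_add
    (ha : IsUnit (1 + a)) (hb : IsUnit (1 + b)) :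
    cayleyTransform a * cayleyTransform b * (1 + b) =
      1 + b - 2 • (Ring.inverse (1 + a) * (a + b)) := by
  calc cayleyTransform a * cayleyTransform b * (1 + b)
      = Ring.inverse (1 + a) * ((1 - a) * (1 - b)) := by
        rw [mul_assoc, cayleyTransform_mul_one_add hb, cayleyTransform, mul_assoc]
    _ = Ring.inverse (1 + a) * ((1 + a) * (1 + b) - 2 • (a + b)) := by
        rw [one_add_mul_one_add_sub_two_nsmul]
    _ = 1 + b - 2 • (Ring.inverse (1 + a) * (a + b)) := by
        rw [mul_sub, Ring.inverse_mul_cancel_left _ _ ha, mul_smul_comm]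

end Ring

section Algebra

variable {𝕜 R M : Type*} [Field 𝕜] [Ring R] [Algebra 𝕜 R]

lemma factorizedTransition_mul_one_add [NeZero (2 : 𝕜)] {σ τ : 𝕜} {a₁ a₂ : R} (hσ : σ ≠ 0)
    (h₁ : IsUnit (1 + (σ * τ) • a₁)) (h₂ : IsUnit (1 + (σ * τ) • a₂)) :
    factorizedTransition σ τ a₁ a₂ * (1 + (σ * τ) • a₂) =
      1 + (σ * τ) • a₂ - τ • (Ring.inverse (1 + (σ * τ) • a₁) * (a₁ + a₂)) := by
  have h2σ : 2 * σ ≠ 0 := mul_ne_zero two_ne_zero hσ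
  have hweights : (2 * σ - 1) / (2 * σ) + 1 / (2 * σ) = 1 := by
    rw [← add_div, sub_add_cancel, div_self h2σ]
  have hscale : 1 / (2 * σ) * (2 * σ * τ) = τ := by
    rw [← mul_assoc, one_div_mul_cancel h2σ, one_mul]
  have hcayley : cayleyTransform ((σ * τ) • a₁) * cayleyTransform ((σ * τ) • a₂) *
      (1 + (σ * τ) • a₂) =
        1 + (σ * τ) • a₂ - (2 * σ * τ) • (Ring.inverse (1 + (σ * τ) • a₁) * (a₁ + a₂)) := by
    rw [cayleyTransform_mul_cayleyTransform_mul_one_add h₁ h₂, ← smul_add, mul_smul_comm,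
      mul_assoc 2 σ τ, mul_smul 2 (σ * τ), two_smul 𝕜, two_nsmul]
  set b := 1 + (σ * τ) • a₂
  set r := Ring.inverse (1 + (σ * τ) • a₁) * (a₁ + a₂)
  calc factorizedTransition σ τ a₁ a₂ * b
      = ((2 * σ - 1) / (2 * σ)) • b + (1 / (2 * σ)) • (b - (2 * σ * τ) • r) := by
        rw [factorizedTransition, add_mul, smul_mul_assoc, one_mul, smul_mul_assoc, hcayley]
    _ = b - τ • r := by
        rw [smul_sub, smul_smul, hscale, ← add_sub_assoc, ← add_smul, hweights, one_smul]

variable [AddCommGroup M] [Module 𝕜 M] [Module R M] [IsScalarTower 𝕜 R M]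

lemma smul_eq_of_mul_smul_inv_smul_sub_add_smul_eq {τ : 𝕜} {a b c : R} {x x' f : M} (hτ : τ ≠ 0)
    (hb : IsUnit b) (h : (b * c) • (τ⁻¹ • (x' - x)) + a • x = f) :
    c • x' = (c - τ • (Ring.inverse b * a)) • x + τ • (Ring.inverse b • f) := by
  have hf : Ring.inverse b • f = τ⁻¹ • (c • x' - c • x) + (Ring.inverse b * a) • x := by
    rw [← h, smul_add, smul_smul, smul_smul, Ring.inverse_mul_cancel_left _ _ hb, smul_comm,
      smul_sub]
  rw [hf, smul_add, smul_inv_smul₀ hτ, sub_smul, smul_assoc]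
  abel

lemma one_add_smul_eq_factorizedTransition_smul [NeZero (2 : 𝕜)] {σ τ : 𝕜} {a₁ a₂ : R}
    {x x' f : M} (hσ : σ ≠ 0) (hτ : τ ≠ 0)
    (h₁ : IsUnit (1 + (σ * τ) • a₁)) (h₂ : IsUnit (1 + (σ * τ) • a₂))
    (h : ((1 + (σ * τ) • a₁) * (1 + (σ * τ) • a₂)) • (τ⁻¹ • (x' - x)) + (a₁ + a₂) • x = f) :
    (1 + (σ * τ) • a₂) • x' =
      factorizedTransition σ τ a₁ a₂ • ((1 + (σ * τ) • a₂) • x) +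
        τ • (Ring.inverse (1 + (σ * τ) • a₁) • f) := by
  rw [smul_smul, factorizedTransition_mul_one_add hσ h₁ h₂]
  exact smul_eq_of_mul_smul_inv_smul_sub_add_smul_eq hτ h₁ h

end Algebra

lemma isUnit_one_add_of_forall_re_inner_nonneg {𝕜 H : Type*} [RCLike 𝕜] [NormedAddCommGroup H]
    [InnerProductSpace 𝕜 H] [CompleteSpace H] {A : H →L[𝕜] H}
    (hA : ∀ u, 0 ≤ RCLike.re (inner 𝕜 (A u) u)) : IsUnit (1 + A) := by
  refine ContinuousLinearMap.isUnit_of_forall_le_norm_inner_map _ one_pos fun u => ?_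
  calc ‖u‖ ^ 2 * ((1 : NNReal) : ℝ) = ‖u‖ ^ 2 := by rw [NNReal.coe_one, mul_one]
    _ ≤ ‖u‖ ^ 2 + RCLike.re (inner 𝕜 (A u) u) := le_add_of_nonneg_right (hA u)
    _ = RCLike.re (inner 𝕜 ((1 + A) u) u) := by
        rw [add_apply, one_apply_eq_self, inner_add_left, map_add, inner_self_eq_norm_sq]
    _ ≤ ‖inner 𝕜 ((1 + A) u) u‖ := RCLike.re_le_norm _

theorem factorized_scheme_transition_general
    {H : Type*} [NormedAddCommGroup H] [InnerProductSpace ℝ H] [CompleteSpace H]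
    (A₁ A₂ : H →L[ℝ] H)
    (hA₁pos : ∀ u : H, 0 ≤ ⟪A₁ u, u⟫)
    (hA₂pos : ∀ u : H, 0 ≤ ⟪A₂ u, u⟫)
    (τ : ℝ) (hτ : 0 < τ)
    (σ : ℝ) (hσ : 0 < σ)
    (B₁ B₂ S₁ S₂ : H →L[ℝ] H)
    (hB₁ : B₁ = (1 : H →L[ℝ] H) + (σ * τ) • A₁)
    (hB₂ : B₂ = (1 : H →L[ℝ] H) + (σ * τ) • A₂)
    (hS₁ : S₁ = Ring.inverse B₁ * ((1 : H →L[ℝ] H) - (σ * τ) • A₁))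
    (hS₂ : S₂ = Ring.inverse B₂ * ((1 : H →L[ℝ] H) - (σ * τ) • A₂))
    (y y' φ : H)
    (hscheme : (B₁ * B₂) (τ⁻¹ • (y' - y)) + (A₁ + A₂) y = φ) :
    B₂ y' =
      (((2 * σ - 1) / (2 * σ)) • (1 : H →L[ℝ] H) + (1 / (2 * σ)) • (S₁ * S₂)) (B₂ y) +
        τ • (Ring.inverse B₁) φ ∧
    B₁ * B₂ - (2 * σ * τ) • (A₁ + A₂) =
      ((1 : H →L[ℝ] H) - (σ * τ) • A₁) * ((1 : H →L[ℝ] H) - (σ * τ) • A₂) := by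
  have hunit (A : H →L[ℝ] H) (hA : ∀ u, 0 ≤ ⟪A u, u⟫) : IsUnit (1 + (σ * τ) • A) :=
    isUnit_one_add_of_forall_re_inner_nonneg fun u => by
      rw [smul_apply, real_inner_smul_left]
      exact mul_nonneg (mul_pos hσ hτ).le (hA u)
  have : IsScalarTower ℝ (H →L[ℝ] H) H := ⟨fun _ _ _ => rfl⟩
  subst hB₁ hB₂ hS₁ hS₂
  constructor
  · exact one_add_smul_eq_factorizedTransition_smul hσ.ne' hτ.ne' (hunit A₁ hA₁pos)
      (hunit A₂ hA₂pos) hscheme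
  · rw [← one_add_mul_one_add_sub_two_nsmul, ← smul_add, mul_assoc 2 σ τ, mul_smul 2 (σ * τ),
      two_smul ℝ, two_nsmul]

/-- One step of the factorized scheme written through the transition operator:
if `B₁B₂(y' − y)/τ + (A₁ + A₂)y = φ` with `B_α = I + στA_α`,
`S_α = B_α⁻¹(I − στA_α)`, then `B₂y' = S(B₂y) + τB₁⁻¹φ` with
`S = ((2σ−1)/(2σ))I + (1/(2σ))S₁S₂`; equivalently,
`B₁B₂ − 2στ(A₁ + A₂) = (I − στA₁)(I − στA₂)`. -/
theorem factorized_scheme_transition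
    {H : Type*} [NormedAddCommGroup H] [InnerProductSpace ℝ H]
    [FiniteDimensional ℝ H]
    (A₁ A₂ : H →L[ℝ] H)
    (hA₁sa : ∀ u v : H, ⟪A₁ u, v⟫ = ⟪u, A₁ v⟫)
    (hA₂sa : ∀ u v : H, ⟪A₂ u, v⟫ = ⟪u, A₂ v⟫)
    (hA₁pos : ∀ u : H, 0 ≤ ⟪A₁ u, u⟫)
    (hA₂pos : ∀ u : H, 0 ≤ ⟪A₂ u, u⟫)
    (τ : ℝ) (hτ : 0 < τ)
    (σ : ℝ) (hσ : 0 < σ)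
    (B₁ B₂ S₁ S₂ : H →L[ℝ] H)
    (hB₁ : B₁ = (1 : H →L[ℝ] H) + (σ * τ) • A₁)
    (hB₂ : B₂ = (1 : H →L[ℝ] H) + (σ * τ) • A₂)
    (hS₁ : S₁ = Ring.inverse B₁ * ((1 : H →L[ℝ] H) - (σ * τ) • A₁))
    (hS₂ : S₂ = Ring.inverse B₂ * ((1 : H →L[ℝ] H) - (σ * τ) • A₂))
    (y y' φ : H)
    (hscheme : (B₁ * B₂) (τ⁻¹ • (y' - y)) + (A₁ + A₂) y = φ) :
    B₂ y' =
      (((2 * σ - 1) / (2 * σ)) • (1 : H →L[ℝ] H) + (1 / (2 * σ)) • (S₁ * S₂)) (B₂ y) +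
        τ • (Ring.inverse B₁) φ ∧
    B₁ * B₂ - (2 * σ * τ) • (A₁ + A₂) =
      ((1 : H →L[ℝ] H) - (σ * τ) • A₁) * ((1 : H →L[ℝ] H) - (σ * τ) • A₂) := by
  have := FiniteDimensional.complete ℝ H
  exact factorized_scheme_transition_general A₁ A₂ hA₁pos hA₂pos τ hτ σ hσ B₁ B₂ S₁ S₂
    hB₁ hB₂ hS₁ hS₂ y y' φ hscheme
end
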